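/- arXiv:1711.08439 — 2 statements merged into one kernel-verified Lean document; each statement's English description precedes it below -/
import Mathlib

section
/- There exists a constant C > 0 such that for all R ≥ 1 and all u ∈ H¹(Γ_R), the trace of u on Σ_R satisfies ‖u‖_{L²(Σ_R)} ≤ C ‖u‖_{H¹(Γ_R)} (with C independent of R). -/
/-!
Integrating the derivative of `(s - a) ‖f s‖²` over `[a, b]` gives
`(b - a) ‖f b‖² = ∫ (‖f‖² + 2 (s - a) ⟪f, f'⟫) ≤ (1 + (b - a)) ∫ (‖f‖² + ‖f'‖²)`.
By Fubini this bounds the trace on the end of a cylinder of length `L`, with factor `(1 + L) / L`.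
The arm `(-1, R) × I` of `Γ_R` has length `R + 1 ≥ 1`, so the factor is at most `2` whatever `R ≥ 0`
is; exchanging the coordinates, which preserves `Γ_R`, treats the other arm.
-/

noncomputable section
open MeasureTheory Set Real

/-- The interval `I = (-1,0)`. -/
def II : Set ℝ := Set.Ioo (-1) 0

/-- The broken guide `Γ = {x ∈ ℝ² : -1 < min(x₁,x₂) < 0}`. -/
def Gam : Set (ℝ × ℝ) := {p | -1 < min p.1 p.2 ∧ min p.1 p.2 < 0}

/-- The box `□_L = {x : max(|x₁+1|,|x₂+1|) < L}`. -/
def Box (L : ℝ) : Set (ℝ × ℝ) := {p | |p.1 + 1| < L ∧ |p.2 + 1| < L}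

/-- The finite guide `Γ_R = Γ ∩ □_{R+1}`. -/
def GamR (R : ℝ) : Set (ℝ × ℝ) := Gam ∩ Box (R + 1)

/-- The Neumann part `Σ_R = ∂Γ_R ∩ ∂□_{R+1}` of the boundary. -/
def Sig (R : ℝ) : Set (ℝ × ℝ) := frontier (GamR R) ∩ frontier (Box (R + 1))

/-- The Dirichlet part `∂Γ_R ∖ Σ_R` of the boundary. -/
def DirB (R : ℝ) : Set (ℝ × ℝ) := frontier (GamR R) \ Sig R

/-- Squared gradient `|∇u|² = (∂₁u)² + (∂₂u)²`. -/
def gradSq2 (u : ℝ × ℝ → ℝ) (p : ℝ × ℝ) : ℝ :=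
  (fderiv ℝ u p (1, 0)) ^ 2 + (fderiv ℝ u p (0, 1)) ^ 2

/-- Admissible functions for the mixed problem on `Γ_R`: `C¹` up to the boundary
(modelled by a globally `C¹` extension) vanishing on the Dirichlet part. -/
def AdmR (R : ℝ) (u : ℝ × ℝ → ℝ) : Prop :=
  ContDiff ℝ 1 u ∧ ∀ p ∈ DirB R, u p = 0

/-- First Rayleigh quotient `λ₁(Γ_R)` of the mixed Dirichlet–Neumann Laplacian on `Γ_R`. -/
def lamR (R : ℝ) : ℝ :=
  sInf {r | ∃ u : ℝ × ℝ → ℝ, AdmR R u ∧ (∫ p in GamR R, (u p) ^ 2) ≠ 0 ∧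
    r = (∫ p in GamR R, gradSq2 u p) / ∫ p in GamR R, (u p) ^ 2}

/-- First Rayleigh quotient `λ₁(Γ)` of the Dirichlet Laplacian on the broken guide `Γ`. -/
def lamG : ℝ :=
  sInf {r | ∃ u : ℝ × ℝ → ℝ, ContDiff ℝ 1 u ∧ HasCompactSupport u ∧ tsupport u ⊆ Gam ∧
    (∫ p in Gam, (u p) ^ 2) ≠ 0 ∧
    r = (∫ p in Gam, gradSq2 u p) / ∫ p in Gam, (u p) ^ 2}

/-- `ω = √(π² − λ₁(Γ))`. -/
def omega : ℝ := Real.sqrt (π ^ 2 - lamG)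

section Interval

variable {E : Type*} [NormedAddCommGroup E] [InnerProductSpace ℝ E] {f f' : ℝ → E} {a b : ℝ}

lemma sub_mul_norm_sq_eq_integral (hf : ∀ s ∈ uIcc a b, HasDerivAt f (f' s) s)
    (hf' : ContinuousOn f' (uIcc a b)) :
    (b - a) * ‖f b‖ ^ 2 = ∫ s in a..b, (‖f s‖ ^ 2 + (s - a) * (2 * inner ℝ (f s) (f' s))) := by
  have hfc : ContinuousOn f (uIcc a b) := fun s hs => (hf s hs).continuousAt.continuousWithinAt
  have hderiv (s : ℝ) (hs : s ∈ uIcc a b) : HasDerivAt (fun s => (s - a) * ‖f s‖ ^ 2)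
      (‖f s‖ ^ 2 + (s - a) * (2 * inner ℝ (f s) (f' s))) s := by
    simpa only [one_mul] using ((hasDerivAt_id' s).sub_const a).fun_mul (hf s hs).norm_sq
  have hint : IntervalIntegrable (fun s => ‖f s‖ ^ 2 + (s - a) * (2 * inner ℝ (f s) (f' s)))
      volume a b :=
    ContinuousOn.intervalIntegrable (by fun_prop)
  simp [intervalIntegral.integral_eq_sub_of_hasDerivAt hderiv hint]

lemma two_mul_inner_le_norm_sq_add_norm_sq (x y : E) :
    2 * inner ℝ x y ≤ ‖x‖ ^ 2 + ‖y‖ ^ 2 := by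
  linarith [norm_sub_sq_real x y, sq_nonneg ‖x - y‖]

lemma sub_mul_norm_sq_le_integral (hab : a ≤ b) (hf : ∀ s ∈ Icc a b, HasDerivAt f (f' s) s)
    (hf' : ContinuousOn f' (Icc a b)) :
    (b - a) * ‖f b‖ ^ 2 ≤ (1 + (b - a)) * ∫ s in Ioo a b, (‖f s‖ ^ 2 + ‖f' s‖ ^ 2) := by
  have hfc : ContinuousOn f (Icc a b) := fun s hs => (hf s hs).continuousAt.continuousWithinAt
  rw [← integral_Ioc_eq_integral_Ioo, ← intervalIntegral.integral_of_le hab,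
    ← intervalIntegral.integral_const_mul]
  rw [← uIcc_of_le hab] at hf hf' hfc
  rw [sub_mul_norm_sq_eq_integral hf hf']
  refine intervalIntegral.integral_mono_on hab (ContinuousOn.intervalIntegrable (by fun_prop))
    (ContinuousOn.intervalIntegrable (by fun_prop)) fun s hs => ?_
  calc ‖f s‖ ^ 2 + (s - a) * (2 * inner ℝ (f s) (f' s))
    _ ≤ ‖f s‖ ^ 2 + (s - a) * (‖f s‖ ^ 2 + ‖f' s‖ ^ 2) := by
      gcongr
      exacts [sub_nonneg.2 hs.1, two_mul_inner_le_norm_sq_add_norm_sq _ _]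
    _ ≤ (‖f s‖ ^ 2 + ‖f' s‖ ^ 2) + (b - a) * (‖f s‖ ^ 2 + ‖f' s‖ ^ 2) := by
      gcongr
      exacts [le_add_of_nonneg_right (sq_nonneg _), hs.2]
    _ = (1 + (b - a)) * (‖f s‖ ^ 2 + ‖f' s‖ ^ 2) := by ring

end Interval

lemma integrableOn_of_continuous_of_isBounded {X F : Type*} [PseudoMetricSpace X] [ProperSpace X]
    [MeasurableSpace X] [OpensMeasurableSpace X] [NormedAddCommGroup F] {μ : Measure X}
    [IsFiniteMeasureOnCompacts μ] {g : X → F} {s : Set X} (hg : Continuous g)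
    (hs : Bornology.IsBounded s) : IntegrableOn g s μ :=
  (hg.continuousOn.integrableOn_compact' hs.isCompact_closure
    isClosed_closure.measurableSet).mono_set subset_closure

lemma sub_mul_setIntegral_norm_sq_le {E Y : Type*} [NormedAddCommGroup E] [InnerProductSpace ℝ E]
    [NormedAddCommGroup Y] [NormedSpace ℝ Y] [ProperSpace Y] [MeasurableSpace Y] [BorelSpace Y]
    {ν : Measure Y} [IsLocallyFiniteMeasure ν] {u : ℝ × Y → E}
    (hu : ContDiff ℝ 1 u) {a b : ℝ} (hab : a ≤ b) {T : Set Y} (hT : Bornology.IsBounded T) :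
    (b - a) * ∫ y in T, ‖u (b, y)‖ ^ 2 ∂ν ≤
      (1 + (b - a)) *
        ∫ p in Ioo a b ×ˢ T, (‖u p‖ ^ 2 + ‖fderiv ℝ u p (1, 0)‖ ^ 2) ∂(volume.prod ν) := by
  have hint : Integrable (fun p => ‖u p‖ ^ 2 + ‖fderiv ℝ u p (1, 0)‖ ^ 2)
      ((volume.restrict (Ioo a b)).prod (ν.restrict T)) := by
    rw [Measure.prod_restrict]
    exact integrableOn_of_continuous_of_isBounded (by fun_prop) ((Metric.isBounded_Ioo a b).prod hT)
  have hpartial (y : Y) (s : ℝ) :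
      HasDerivAt (fun s => u (s, y)) (fderiv ℝ u (s, y) (1, 0)) s :=
    (hu.differentiable one_ne_zero (s, y)).hasFDerivAt.comp_hasDerivAt s
      ((hasDerivAt_id' s).prodMk (hasDerivAt_const s y))
  rw [← Measure.prod_restrict, integral_prod_symm _ hint, ← integral_const_mul,
    ← integral_const_mul]
  refine integral_mono ?_ (hint.integral_prod_right.const_mul _) fun y =>
    sub_mul_norm_sq_le_integral hab (fun s _ => hpartial y s) (by fun_prop)
  exact integrableOn_of_continuous_of_isBounded (by fun_prop) hT

lemma Ioo_prod_II_subset_GamR {R : ℝ} (hR : 0 ≤ R) : Ioo (-1) R ×ˢ II ⊆ GamR R := by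
  rintro ⟨s, t⟩ ⟨⟨hs, hsR⟩, ht, ht0⟩
  dsimp only at hs hsR ht ht0
  refine ⟨⟨lt_min hs ht, min_lt_of_right_lt ht0⟩, abs_lt.2 ?_, abs_lt.2 ?_⟩ <;>
    constructor <;> dsimp only <;> linarith

lemma isBounded_GamR (R : ℝ) : Bornology.IsBounded (GamR R) := by
  refine (Metric.isBounded_ball (x := ((-1, -1) : ℝ × ℝ)) (r := R + 1)).subset ?_
  rintro ⟨s, t⟩ ⟨-, hs, ht⟩
  simpa [Prod.dist_eq, Real.dist_eq] using And.intro hs ht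

lemma swap_preimage_GamR (R : ℝ) : Prod.swap ⁻¹' GamR R = GamR R := by
  ext p
  simp [GamR, Gam, Box, and_comm, or_comm]

lemma gradSq2_comp_swap (u : ℝ × ℝ → ℝ) (p : ℝ × ℝ) :
    gradSq2 (u ∘ Prod.swap) p = gradSq2 u p.swap := by
  have hfderiv : fderiv ℝ (u ∘ Prod.swap) p =
      (fderiv ℝ u p.swap).comp (ContinuousLinearEquiv.prodComm ℝ ℝ ℝ : ℝ × ℝ →L[ℝ] ℝ × ℝ) :=
    (ContinuousLinearEquiv.prodComm ℝ ℝ ℝ).comp_right_fderiv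
  simp [gradSq2, hfderiv, add_comm]

/-- The squared norm of `u` in `H¹(Γ_R)`, the quantity that controls the traces on `Σ_R`; it is the
classical one, through `fderiv`, hence meant for functions of class `C¹`. -/
def h1NormSq (R : ℝ) (u : ℝ × ℝ → ℝ) : ℝ :=
  ∫ p in GamR R, (u p ^ 2 + gradSq2 u p)

lemma sq_add_gradSq2_nonneg (u : ℝ × ℝ → ℝ) (p : ℝ × ℝ) : 0 ≤ u p ^ 2 + gradSq2 u p := by
  unfold gradSq2
  positivity

lemma h1NormSq_nonneg (R : ℝ) (u : ℝ × ℝ → ℝ) : 0 ≤ h1NormSq R u :=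
  integral_nonneg (sq_add_gradSq2_nonneg u)

lemma h1NormSq_comp_swap (R : ℝ) (u : ℝ × ℝ → ℝ) :
    h1NormSq R (u ∘ Prod.swap) = h1NormSq R u := by
  have hswap : MeasurePreserving (Prod.swap : ℝ × ℝ → ℝ × ℝ) volume volume :=
    Measure.measurePreserving_swap
  simpa only [h1NormSq, gradSq2_comp_swap, Function.comp_apply, swap_preimage_GamR] using
    hswap.setIntegral_preimage_emb MeasurableEquiv.prodComm.measurableEmbedding
      (fun p => u p ^ 2 + gradSq2 u p) (GamR R)

section Trace

variable {R : ℝ} {u : ℝ × ℝ → ℝ}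

lemma setIntegral_arm_le_h1NormSq (hR : 0 ≤ R) (hu : ContDiff ℝ 1 u) :
    ∫ p in Ioo (-1) R ×ˢ II, (u p ^ 2 + fderiv ℝ u p (1, 0) ^ 2) ≤ h1NormSq R u := by
  have hint : IntegrableOn (fun p => u p ^ 2 + gradSq2 u p) (GamR R) :=
    integrableOn_of_continuous_of_isBounded (by unfold gradSq2; fun_prop) (isBounded_GamR R)
  have harm := Ioo_prod_II_subset_GamR hR
  calc ∫ p in Ioo (-1) R ×ˢ II, (u p ^ 2 + fderiv ℝ u p (1, 0) ^ 2)
    _ ≤ ∫ p in Ioo (-1) R ×ˢ II, (u p ^ 2 + gradSq2 u p) := by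
      refine integral_mono ?_ (hint.mono_set harm) fun p => ?_
      · exact integrableOn_of_continuous_of_isBounded (by fun_prop)
          ((isBounded_GamR R).subset harm)
      · exact add_le_add_right (le_add_of_nonneg_right (sq_nonneg _)) _
    _ ≤ h1NormSq R u :=
      setIntegral_mono_set hint (.of_forall (sq_add_gradSq2_nonneg u)) harm.eventuallyLE

lemma setIntegral_sq_right_edge_le (hR : 0 ≤ R) (hu : ContDiff ℝ 1 u) :
    ∫ t in II, u (R, t) ^ 2 ≤ 2 * h1NormSq R u := by
  have hcyl : (R + 1) * ∫ t in II, u (R, t) ^ 2 ≤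
      (1 + (R + 1)) * ∫ p in Ioo (-1) R ×ˢ II, (u p ^ 2 + fderiv ℝ u p (1, 0) ^ 2) := by
    simpa only [norm_eq_abs, sq_abs, sub_neg_eq_add, ← Measure.volume_eq_prod] using
      sub_mul_setIntegral_norm_sq_le (ν := volume) (T := II) hu (by linarith : -1 ≤ R)
        (Metric.isBounded_Ioo _ _)
  refine le_of_mul_le_mul_left ?_ (by linarith : 0 < R + 1)
  calc (R + 1) * ∫ t in II, u (R, t) ^ 2
    _ ≤ (1 + (R + 1)) * h1NormSq R u :=
      hcyl.trans (by gcongr; exact setIntegral_arm_le_h1NormSq hR hu)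
    _ ≤ ((R + 1) * 2) * h1NormSq R u :=
      mul_le_mul_of_nonneg_right (by linarith) (h1NormSq_nonneg R u)
    _ = (R + 1) * (2 * h1NormSq R u) := mul_assoc _ _ _

lemma setIntegral_sq_top_edge_le (hR : 0 ≤ R) (hu : ContDiff ℝ 1 u) :
    ∫ t in II, u (t, R) ^ 2 ≤ 2 * h1NormSq R u := by
  have huswap : ContDiff ℝ 1 (u ∘ Prod.swap) := hu.comp (contDiff_snd.prodMk contDiff_fst)
  simpa only [h1NormSq_comp_swap, Function.comp_apply, Prod.swap_prod_mk] using
    setIntegral_sq_right_edge_le hR huswap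

theorem uniform_trace_estimate_general (hR : 0 ≤ R) (hu : ContDiff ℝ 1 u) :
    √((∫ t in II, u (R, t) ^ 2) + ∫ t in II, u (t, R) ^ 2) ≤
      2 * √(∫ p in GamR R, (u p ^ 2 + gradSq2 u p)) := by
  change _ ≤ 2 * √(h1NormSq R u)
  have hsum : (∫ t in II, u (R, t) ^ 2) + ∫ t in II, u (t, R) ^ 2 ≤ 2 ^ 2 * h1NormSq R u := by
    linarith [setIntegral_sq_right_edge_le hR hu, setIntegral_sq_top_edge_le hR hu]
  refine (sqrt_le_sqrt hsum).trans_eq ?_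
  rw [sqrt_mul (by positivity), sqrt_sq zero_le_two]

end Trace

/-- Lemma 1.3: uniform trace estimate. There is a constant `C > 0`,
independent of `R`, such that for all `R ≥ 1` and all `u ∈ H¹(Γ_R)` (modelled by a
globally `C¹` function), the trace of `u` on `Σ_R = ({R}×I) ∪ (I×{R})` satisfies
`‖u‖_{L²(Σ_R)} ≤ C ‖u‖_{H¹(Γ_R)}`. -/
theorem uniform_trace_estimate :
    ∃ C : ℝ, 0 < C ∧ ∀ R : ℝ, 1 ≤ R → ∀ u : ℝ × ℝ → ℝ, ContDiff ℝ 1 u →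
      Real.sqrt ((∫ t in II, (u (R, t)) ^ 2) + ∫ t in II, (u (t, R)) ^ 2) ≤
        C * Real.sqrt (∫ p in GamR R, ((u p) ^ 2 + gradSq2 u p)) := by
  exact ⟨2, two_pos, fun R hR u hu => uniform_trace_estimate_general (zero_le_one.trans hR) hu⟩
end
end

section
/- Let u ∈ H¹₀(Λ) be a nonzero weak eigenfunction of the Dirichlet Laplacian on the Fichera layer: −Δu = λu weakly in Λ with λ < λ₁(Γ). Then u is invariant under all permutations of the coordinates: u(x₁,x₂,x₃)=u(x_{σ(1)},x_{σ(2)},x_{σ(3)}) for every permutation σ of {1,2,3}; equivalently, u is even with respect to each of the three diagonal planes x_i=x_j (i<j) and satisfies the Neumann condition ∂_n u=0 on these planes. -/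
/-!
Let `S` exchange the first two coordinates. The function `u - u ∘ S` solves the same equation as `u`
and vanishes on the mirror `x₁ = x₂`, so its restriction `w` to `Λ ∩ {x₂ < x₁}` is again a Dirichlet
solution with eigenvalue `λ`. On that half of `Λ` the minimum of the coordinates is `min x₂ x₃`:
every slice at fixed `x₁` lies in `Γ`, and Fubini gives `λ₁(Γ) ∫ f² ≤ ∫ |∇f|²` for test functions
`f`. Smooth truncations of `w` near its zero set, multiplied by cutoffs at infinity, are test
functions converging to `w` in energy; passing to the limit gives `λ₁(Γ) ∫ w² ≤ ∫ |∇w|² = λ ∫ w²`,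
and `λ < λ₁(Γ)` forces `w = 0`. The exchange of the last two coordinates follows by conjugating with
a cyclic permutation, and adjacent transpositions generate all permutations.
-/

noncomputable section
open MeasureTheory Set Real

/-- The Fichera layer `Λ = {x ∈ ℝ³ : -1 < min(x₁,x₂,x₃) < 0}`. -/
def Lam3 : Set (ℝ × ℝ × ℝ) :=
  {x | -1 < min x.1 (min x.2.1 x.2.2) ∧ min x.1 (min x.2.1 x.2.2) < 0}

/-- The residual domain `Ω_R³ = {x : x₃ > R and (x₁,x₂) ∈ Γ_{x₃}}`. -/
def Om3 (R : ℝ) : Set (ℝ × ℝ × ℝ) := {x | R < x.2.2 ∧ (x.1, x.2.1) ∈ GamR x.2.2}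

/-- Squared gradient in 3D: `|∇u|² = (∂₁u)² + (∂₂u)² + (∂₃u)²`. -/
def gradSq3 (u : ℝ × ℝ × ℝ → ℝ) (x : ℝ × ℝ × ℝ) : ℝ :=
  (fderiv ℝ u x (1, 0, 0)) ^ 2 + (fderiv ℝ u x (0, 1, 0)) ^ 2 + (fderiv ℝ u x (0, 0, 1)) ^ 2

/-- Partial derivative in direction `e` in 3D. -/
def pd3 (e : ℝ × ℝ × ℝ) (u : ℝ × ℝ × ℝ → ℝ) : ℝ × ℝ × ℝ → ℝ := fun x => fderiv ℝ u x e

/-- Laplacian in 3D. -/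
def lap3 (u : ℝ × ℝ × ℝ → ℝ) (x : ℝ × ℝ × ℝ) : ℝ :=
  pd3 (1,0,0) (pd3 (1,0,0) u) x + pd3 (0,1,0) (pd3 (0,1,0) u) x +
    pd3 (0,0,1) (pd3 (0,0,1) u) x

/-- Eigenfunction of the Dirichlet Laplacian on the Fichera layer `Λ` with eigenvalue
`lam`: a nonzero function in `H¹₀(Λ) ∩ L²`, extended by `0` outside `Λ`, classical
solution of `-Δu = λ u` in `Λ`. -/
def IsEigenLam (lam : ℝ) (u : ℝ × ℝ × ℝ → ℝ) : Prop :=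
  Continuous u ∧ (∀ x ∉ Lam3, u x = 0) ∧ ContDiffOn ℝ 2 u Lam3 ∧
  IntegrableOn (fun x => (u x) ^ 2) Lam3 ∧ IntegrableOn (fun x => gradSq3 u x) Lam3 ∧
  (∀ x ∈ Lam3, -(lap3 u x) = lam * u x) ∧ (∃ x, u x ≠ 0)

/-- Coordinates of a point of `ℝ³` as a function on `Fin 3`. -/
def coord3 (x : ℝ × ℝ × ℝ) : Fin 3 → ℝ := ![x.1, x.2.1, x.2.2]

open Filter Topology

/-! ### Gradient forms and Laplacians along a frame -/

section Frame

variable {E ι : Type*} [NormedAddCommGroup E] [NormedSpace ℝ E] [Fintype ι]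

/-- The gradient form `∇u · ∇v = ∑ᵢ (∂ᵢu)(∂ᵢv)` along a finite family `e` of directions. The frame
is explicit because the sup norm of a product of lines carries no inner product. -/
def frameInner (e : ι → E) (u v : E → ℝ) (x : E) : ℝ :=
  ∑ i, fderiv ℝ u x (e i) * fderiv ℝ v x (e i)

/-- The Laplacian `∑ᵢ ∂ᵢ∂ᵢu` along a finite family `e` of directions. -/
def frameLaplacian (e : ι → E) (u : E → ℝ) (x : E) : ℝ :=
  ∑ i, fderiv ℝ (fun y => fderiv ℝ u y (e i)) x (e i)

variable {e : ι → E} {u v : E → ℝ} {x : E}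

lemma frameInner_self_nonneg : 0 ≤ frameInner e u u x :=
  Finset.sum_nonneg fun _ _ => mul_self_nonneg _

lemma abs_frameInner_le : |frameInner e u v x| ≤ frameInner e u u x + frameInner e v v x := by
  simp only [frameInner, ← Finset.sum_add_distrib]
  refine (Finset.abs_sum_le_sum_abs _ _).trans (Finset.sum_le_sum fun i _ => ?_)
  rw [abs_le]
  constructor <;> nlinarith [sq_nonneg (fderiv ℝ u x (e i) + fderiv ℝ v x (e i)),
    sq_nonneg (fderiv ℝ u x (e i) - fderiv ℝ v x (e i))]

lemma frameInner_eq_zero_of_notMem_tsupport (hx : x ∉ tsupport u) : frameInner e u v x = 0 := by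
  simp [frameInner, fderiv_of_notMem_tsupport ℝ hx]

lemma frameInner_congr (h : u =ᶠ[𝓝 x] v) : frameInner e u u x = frameInner e v v x := by
  simp only [frameInner, h.fderiv_eq]

lemma frameLaplacian_congr (h : u =ᶠ[𝓝 x] v) : frameLaplacian e u x = frameLaplacian e v x := by
  have hderiv (i : ι) : (fun y => fderiv ℝ u y (e i)) =ᶠ[𝓝 x] fun y => fderiv ℝ v y (e i) :=
    h.fderiv.fun_comp fun L => L (e i)
  simp only [frameLaplacian, (hderiv _).fderiv_eq]

lemma frameInner_comp_perm (σ : Equiv.Perm ι) :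
    frameInner (e ∘ σ) u v = frameInner e u v :=
  funext fun x => Equiv.sum_comp σ fun i => fderiv ℝ u x (e i) * fderiv ℝ v x (e i)

lemma frameLaplacian_comp_perm (σ : Equiv.Perm ι) :
    frameLaplacian (e ∘ σ) u = frameLaplacian e u :=
  funext fun x => Equiv.sum_comp σ fun i => fderiv ℝ (fun y => fderiv ℝ u y (e i)) x (e i)

lemma differentiableAt_fderiv_apply (hu : ContDiffAt ℝ 2 u x) (v : E) :
    DifferentiableAt ℝ (fun y => fderiv ℝ u y v) x :=
  ((hu.fderiv_right (m := 1) le_rfl).clm_apply contDiffAt_const).differentiableAt one_ne_zero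

lemma frameInner_sub_self_le (hu : DifferentiableAt ℝ u x) (hv : DifferentiableAt ℝ v x) :
    frameInner e (u - v) (u - v) x ≤ 2 * (frameInner e u u x + frameInner e v v x) := by
  simp only [frameInner, fderiv_sub hu hv, Finset.mul_sum, ← Finset.sum_add_distrib,
    sub_apply]
  exact Finset.sum_le_sum fun i _ => by
    nlinarith [sq_nonneg (fderiv ℝ u x (e i) + fderiv ℝ v x (e i))]

lemma frameLaplacian_sub (hu : ContDiffAt ℝ 2 u x) (hv : ContDiffAt ℝ 2 v x) :
    frameLaplacian e (u - v) x = frameLaplacian e u x - frameLaplacian e v x := by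
  have hderiv (i : ι) : (fun y => fderiv ℝ (u - v) y (e i)) =ᶠ[𝓝 x]
      (fun y => fderiv ℝ u y (e i)) - fun y => fderiv ℝ v y (e i) := by
    filter_upwards [hu.eventually (by simp), hv.eventually (by simp)] with y hyu hyv
    simp [fderiv_sub (hyu.differentiableAt two_ne_zero) (hyv.differentiableAt two_ne_zero)]
  simp only [frameLaplacian, ← Finset.sum_sub_distrib]
  refine Finset.sum_congr rfl fun i _ => ?_
  rw [(hderiv i).fderiv_eq, fderiv_sub (differentiableAt_fderiv_apply hu _)
    (differentiableAt_fderiv_apply hv _), sub_apply]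

lemma measurable_frameInner [MeasurableSpace E] [OpensMeasurableSpace E] :
    Measurable (frameInner e u v) :=
  Finset.measurable_sum _ fun i _ =>
    (measurable_fderiv_apply_const ℝ u (e i)).mul (measurable_fderiv_apply_const ℝ v (e i))

variable {F : Type*} [NormedAddCommGroup F] [NormedSpace ℝ F]

lemma fderiv_comp_equiv_apply (P : E ≃L[ℝ] F) (u : F → ℝ) (x v : E) :
    fderiv ℝ (u ∘ P) x v = fderiv ℝ u (P x) (P v) := by
  rw [P.comp_right_fderiv]; rfl

lemma frameInner_comp_equiv (P : E ≃L[ℝ] F) (u v : F → ℝ) :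
    frameInner e (u ∘ P) (v ∘ P) = frameInner (P ∘ e) u v ∘ P := by
  ext x
  simp [frameInner, fderiv_comp_equiv_apply]

lemma frameLaplacian_comp_equiv (P : E ≃L[ℝ] F) (u : F → ℝ) :
    frameLaplacian e (u ∘ P) = frameLaplacian (P ∘ e) u ∘ P := by
  ext x
  simp only [frameLaplacian, fderiv_comp_equiv_apply, Function.comp_apply]
  exact Finset.sum_congr rfl fun i _ =>
    fderiv_comp_equiv_apply P (fun y => fderiv ℝ u y (P (e i))) x (e i)

end Frame

/-! ### Truncations and cutoffs -/

section Cutoff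

variable {E : Type*} [NormedAddCommGroup E] [NormedSpace ℝ E]

/-- A smooth bump equal to `1` on the unit ball and to `0` outside the ball of radius `2`: the
common profile of `truncation` and `cutoff`. -/
def unitBump (E : Type*) [NormedAddCommGroup E] : ContDiffBump (0 : E) :=
  ⟨1, 2, one_pos, one_lt_two⟩

/-- The `n`-th truncation of the real line: a smooth function vanishing for `|t| ≤ 1 / (n + 1)` and
equal to `t` for `|t| ≥ 2 / (n + 1)`. -/
def truncation (n : ℕ) (t : ℝ) : ℝ := t * (1 - unitBump ℝ (((n : ℝ) + 1) * t))

/-- The `n`-th cutoff: a smooth function equal to `1` on the ball of radius `n + 1` and to `0`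
outside the ball of radius `2 (n + 1)`. -/
def cutoff [FiniteDimensional ℝ E] (n : ℕ) (x : E) : ℝ := unitBump E (((n : ℝ) + 1)⁻¹ • x)

lemma tendsto_inv_smul_nhds_zero (x : E) :
    Tendsto (fun n : ℕ => ((n : ℝ) + 1)⁻¹ • x) atTop (𝓝 0) := by
  simpa using (tendsto_one_div_add_atTop_nhds_zero_nat (𝕜 := ℝ)).smul_const x

variable [FiniteDimensional ℝ E]

lemma exists_norm_fderiv_unitBump_le : ∃ K, ∀ x : E, ‖fderiv ℝ (unitBump E) x‖ ≤ K :=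
  ((unitBump E).hasCompactSupport.fderiv ℝ).exists_bound_of_continuous
    ((unitBump E).contDiff.continuous_fderiv one_ne_zero)

lemma tendsto_atTop_add_one_mul_abs {t : ℝ} (ht : t ≠ 0) :
    Tendsto (fun n : ℕ => ((n : ℝ) + 1) * |t|) atTop atTop :=
  (tendsto_atTop_add_const_right _ _ tendsto_natCast_atTop_atTop).atTop_mul_const (abs_pos.2 ht)

lemma contDiff_truncation (n : ℕ) : ContDiff ℝ 1 (truncation n) :=
  contDiff_id.mul (contDiff_const.sub ((unitBump ℝ).contDiff.comp (contDiff_const.mul contDiff_id)))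

lemma abs_truncation_le (n : ℕ) (t : ℝ) : |truncation n t| ≤ |t| := by
  rw [truncation, abs_mul]
  refine mul_le_of_le_one_right (abs_nonneg t) (abs_le.2 ⟨?_, ?_⟩) <;>
    linarith [(unitBump ℝ).nonneg' (((n : ℝ) + 1) * t),
      (unitBump ℝ).le_one (x := ((n : ℝ) + 1) * t)]

lemma truncation_eventuallyEq_zero (n : ℕ) : truncation n =ᶠ[𝓝 0] 0 := by
  have hscale : Tendsto (fun t : ℝ => ((n : ℝ) + 1) * t) (𝓝 0) (𝓝 0) :=
    Continuous.tendsto' (by fun_prop) _ _ (mul_zero _)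
  filter_upwards [hscale.eventually (unitBump ℝ).eventuallyEq_one] with t ht
  simp [truncation, ht]

lemma truncation_eq_self {n : ℕ} {t : ℝ} (ht : 2 ≤ ((n : ℝ) + 1) * |t|) : truncation n t = t := by
  have hbump : unitBump ℝ (((n : ℝ) + 1) * t) = 0 := by
    refine (unitBump ℝ).zero_of_le_dist ?_
    rwa [dist_zero_right, norm_mul, norm_of_nonneg (by positivity), Real.norm_eq_abs]
  simp [truncation, hbump]

lemma tendsto_truncation (t : ℝ) : Tendsto (truncation · t) atTop (𝓝 t) := by
  rcases eq_or_ne t 0 with rfl | ht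
  · simp [truncation]
  · refine tendsto_const_nhds.congr' ?_
    filter_upwards [(tendsto_atTop_add_one_mul_abs ht).eventually_ge_atTop 2] with n hn
    exact (truncation_eq_self hn).symm

lemma tendsto_deriv_truncation {t : ℝ} (ht : t ≠ 0) :
    Tendsto (fun n => deriv (truncation n) t) atTop (𝓝 1) := by
  refine tendsto_const_nhds.congr' ?_
  filter_upwards [(tendsto_atTop_add_one_mul_abs ht).eventually_gt_atTop 2] with n hn
  have hnear : truncation n =ᶠ[𝓝 t] id := by
    have hcont : Continuous fun r : ℝ => ((n : ℝ) + 1) * |r| := by fun_prop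
    filter_upwards [hcont.tendsto t |>.eventually_const_lt hn] with r hr
    exact truncation_eq_self hr.le
  rw [hnear.deriv_eq, deriv_id]

lemma deriv_truncation (n : ℕ) (t : ℝ) :
    deriv (truncation n) t = deriv (truncation 0) (((n : ℝ) + 1) * t) := by
  have hn : ((n : ℝ) + 1) ≠ 0 := by positivity
  have hscale : truncation n = fun t => ((n : ℝ) + 1)⁻¹ * truncation 0 (((n : ℝ) + 1) * t) := by
    ext t
    simp only [truncation, CharP.cast_eq_zero, zero_add, one_mul]
    field_simp
  rw [hscale, deriv_const_mul_field, deriv_comp_mul_left, smul_eq_mul, inv_mul_cancel_left₀ hn]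

lemma exists_abs_deriv_truncation_le : ∃ M, ∀ n t, |deriv (truncation n) t| ≤ M := by
  have hdiff : ContDiff ℝ 1 fun t => t - truncation 0 t := contDiff_id.sub (contDiff_truncation 0)
  have hcomp : HasCompactSupport fun t => t - truncation 0 t :=
    .intro (isCompact_closedBall 0 2) fun t ht => by
      have ht' : 2 < |t| := by simpa using ht
      rw [truncation_eq_self (by simpa using ht'.le), sub_self]
  obtain ⟨K, hK⟩ := hcomp.deriv.exists_bound_of_continuous (hdiff.continuous_deriv le_rfl)
  refine ⟨1 + K, fun n t => ?_⟩
  rw [deriv_truncation]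
  set r := ((n : ℝ) + 1) * t
  have hderiv : deriv (truncation 0) r = 1 - deriv (fun t => t - truncation 0 t) r := by
    rw [deriv_fun_sub differentiableAt_fun_id
      ((contDiff_truncation 0).differentiable one_ne_zero r), deriv_id'']
    ring
  rw [hderiv]
  exact (abs_sub _ _).trans (add_le_add abs_one.le (hK r))

lemma contDiff_cutoff (n : ℕ) : ContDiff ℝ 1 (cutoff n : E → ℝ) :=
  (unitBump E).contDiff.comp (contDiff_const_smul _)

lemma hasCompactSupport_cutoff (n : ℕ) : HasCompactSupport (cutoff n : E → ℝ) :=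
  (unitBump E).hasCompactSupport.comp_smul (by positivity)

lemma abs_cutoff_le_one (n : ℕ) (x : E) : |cutoff n x| ≤ 1 := by
  rw [cutoff, abs_of_nonneg (unitBump E).nonneg]
  exact (unitBump E).le_one

lemma tendsto_cutoff (x : E) : Tendsto (cutoff · x) atTop (𝓝 1) := by
  refine tendsto_const_nhds.congr' ?_
  filter_upwards [(tendsto_inv_smul_nhds_zero x).eventually (unitBump E).eventuallyEq_one]
    with n hn using hn.symm

lemma fderiv_cutoff (n : ℕ) (x : E) :
    fderiv ℝ (cutoff n) x = ((n : ℝ) + 1)⁻¹ • fderiv ℝ (unitBump E) (((n : ℝ) + 1)⁻¹ • x) :=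
  fderiv_comp_smul _

lemma exists_abs_fderiv_cutoff_le :
    ∃ K, ∀ (n : ℕ) (x v : E), |fderiv ℝ (cutoff n) x v| ≤ K * ‖v‖ := by
  obtain ⟨K, hK⟩ := exists_norm_fderiv_unitBump_le (E := E)
  refine ⟨K, fun n x v => (fderiv ℝ (cutoff n) x).le_of_opNorm_le ?_ v⟩
  have hscale : ‖((n : ℝ) + 1)⁻¹‖ ≤ 1 := by
    rw [norm_of_nonneg (by positivity)]
    exact inv_le_one_of_one_le₀ (by linarith [n.cast_nonneg (α := ℝ)])
  rw [fderiv_cutoff, norm_smul]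
  exact (mul_le_of_le_one_left (norm_nonneg _) hscale).trans (hK _)

lemma tendsto_fderiv_cutoff (x v : E) :
    Tendsto (fun n => fderiv ℝ (cutoff n) x v) atTop (𝓝 0) := by
  refine tendsto_const_nhds.congr' ?_
  have hconst : fderiv ℝ (unitBump E) =ᶠ[𝓝 0] fderiv ℝ 1 := (unitBump E).eventuallyEq_one.fderiv
  filter_upwards [(tendsto_inv_smul_nhds_zero x).eventually hconst] with n hn
  rw [fderiv_cutoff, hn, fderiv_one]
  simp

end Cutoff

/-! ### Approximation by test functions -/

section TestApprox

variable {E ι : Type*} [NormedAddCommGroup E] [NormedSpace ℝ E] [FiniteDimensional ℝ E]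
  [Fintype ι] {w : E → ℝ} {x : E}

/-- Compactly supported `C¹` approximations of a continuous function `w` that is `C¹` where it does
not vanish. Truncating makes them vanish near the zero set of `w`. -/
def testApprox (w : E → ℝ) (n : ℕ) (x : E) : ℝ := cutoff n x * truncation n (w x)

lemma testApprox_eventuallyEq_zero (hw : Continuous w) (hx : w x = 0) (n : ℕ) :
    testApprox w n =ᶠ[𝓝 x] 0 := by
  have hlim : Tendsto w (𝓝 x) (𝓝 0) := hx ▸ hw.tendsto x
  filter_upwards [hlim.eventually (truncation_eventuallyEq_zero n)] with y hy
  simp [testApprox, hy]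

lemma tsupport_testApprox_subset (hw : Continuous w) (n : ℕ) :
    tsupport (testApprox w n) ⊆ Function.support w := fun _ hx hwx =>
  notMem_tsupport_iff_eventuallyEq.2 (testApprox_eventuallyEq_zero hw hwx n) hx

lemma contDiff_testApprox (hw : Continuous w) (hC : ∀ x, w x ≠ 0 → ContDiffAt ℝ 1 w x) (n : ℕ) :
    ContDiff ℝ 1 (testApprox w n) := by
  refine contDiff_iff_contDiffAt.2 fun x => ?_
  by_cases hx : w x = 0
  · exact contDiffAt_const.congr_of_eventuallyEq (testApprox_eventuallyEq_zero hw hx n)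
  · exact (contDiff_cutoff n).contDiffAt.mul ((contDiff_truncation n).contDiffAt.comp x (hC x hx))

lemma hasCompactSupport_testApprox (n : ℕ) : HasCompactSupport (testApprox w n) :=
  (hasCompactSupport_cutoff n).mul_right

lemma abs_testApprox_le (n : ℕ) (x : E) : |testApprox w n x| ≤ |w x| := by
  rw [testApprox, abs_mul]
  exact (mul_le_of_le_one_left (abs_nonneg _) (abs_cutoff_le_one n x)).trans
    (abs_truncation_le n _)

lemma tendsto_testApprox (x : E) : Tendsto (testApprox w · x) atTop (𝓝 (w x)) := by
  simpa [testApprox] using (tendsto_cutoff x).mul (tendsto_truncation (w x))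

lemma fderiv_testApprox_apply (hC : DifferentiableAt ℝ w x) (n : ℕ) (v : E) :
    fderiv ℝ (testApprox w n) x v =
      cutoff n x * (deriv (truncation n) (w x) * fderiv ℝ w x v) +
        truncation n (w x) * fderiv ℝ (cutoff n) x v := by
  have hcut := ((contDiff_cutoff n).differentiable one_ne_zero x).hasFDerivAt
  have htrunc := ((contDiff_truncation n).differentiable one_ne_zero (w x)).hasDerivAt
  have hprod := hcut.mul (htrunc.comp_hasFDerivAt x hC.hasFDerivAt)
  rw [show testApprox w n = cutoff n * (truncation n ∘ w) from rfl, hprod.fderiv]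
  simp

lemma tendsto_fderiv_testApprox (hC : DifferentiableAt ℝ w x) (hx : w x ≠ 0) (v : E) :
    Tendsto (fun n => fderiv ℝ (testApprox w n) x v) atTop (𝓝 (fderiv ℝ w x v)) := by
  have hlim := ((tendsto_cutoff x).mul ((tendsto_deriv_truncation hx).mul_const
    (fderiv ℝ w x v))).add ((tendsto_truncation (w x)).mul (tendsto_fderiv_cutoff x v))
  simpa only [fderiv_testApprox_apply hC, one_mul, mul_zero, add_zero] using hlim

lemma frameInner_testApprox_of_eq_zero (hw : Continuous w) (hx : w x = 0) (e : ι → E) (n : ℕ)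
    (v : E → ℝ) : frameInner e (testApprox w n) v x = 0 :=
  frameInner_eq_zero_of_notMem_tsupport fun hmem => tsupport_testApprox_subset hw n hmem hx

lemma exists_frameInner_testApprox_le (e : ι → E) :
    ∃ C, ∀ (w : E → ℝ) (x : E), DifferentiableAt ℝ w x → ∀ n,
      frameInner e (testApprox w n) (testApprox w n) x ≤ C * (frameInner e w w x + w x ^ 2) := by
  obtain ⟨M, hM⟩ := exists_abs_deriv_truncation_le
  obtain ⟨K, hK⟩ := exists_abs_fderiv_cutoff_le (E := E)
  refine ⟨2 * M ^ 2 + ∑ i, 2 * (K * ‖e i‖) ^ 2, fun w x hx n => ?_⟩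
  have hterm (i : ι) : fderiv ℝ (testApprox w n) x (e i) * fderiv ℝ (testApprox w n) x (e i) ≤
      2 * M ^ 2 * (fderiv ℝ w x (e i) * fderiv ℝ w x (e i)) +
        2 * (K * ‖e i‖) ^ 2 * w x ^ 2 := by
    set a := cutoff n x * (deriv (truncation n) (w x) * fderiv ℝ w x (e i)) with ha_def
    set b := truncation n (w x) * fderiv ℝ (cutoff n) x (e i) with hb_def
    have ha : a ^ 2 ≤ M ^ 2 * fderiv ℝ w x (e i) ^ 2 := by
      rw [← one_mul (M ^ 2), mul_assoc, ha_def, mul_pow, mul_pow]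
      gcongr ?_ * (?_ * _)
      · exact (sq_le_one_iff_abs_le_one _).2 (abs_cutoff_le_one n x)
      · exact sq_le_sq.2 ((hM n _).trans (le_abs_self M))
    have hb : b ^ 2 ≤ w x ^ 2 * (K * ‖e i‖) ^ 2 := by
      rw [hb_def, mul_pow]
      gcongr ?_ * ?_
      · exact sq_le_sq.2 (abs_truncation_le n _)
      · exact sq_le_sq.2 ((hK n x _).trans (le_abs_self _))
    rw [fderiv_testApprox_apply hx]
    nlinarith [sq_nonneg (a - b)]
  calc frameInner e (testApprox w n) (testApprox w n) x
      ≤ 2 * M ^ 2 * frameInner e w w x + (∑ i, 2 * (K * ‖e i‖) ^ 2) * w x ^ 2 := by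
        simpa only [frameInner, Finset.mul_sum, Finset.sum_mul, Finset.sum_add_distrib]
          using Finset.sum_le_sum fun i (_ : i ∈ Finset.univ) => hterm i
    _ ≤ _ := by
        have hsum : 0 ≤ ∑ i, 2 * (K * ‖e i‖) ^ 2 := Finset.sum_nonneg fun i _ => by positivity
        nlinarith [mul_nonneg hsum (frameInner_self_nonneg (e := e) (u := w) (x := x)),
          mul_nonneg (sq_nonneg M) (sq_nonneg (w x))]

end TestApprox

/-! ### Finite-energy Dirichlet solutions -/

section DirichletSolution

variable {E ι : Type*} [NormedAddCommGroup E] [NormedSpace ℝ E] [MeasurableSpace E] [Fintype ι]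

/-- `m` is a lower bound for the Rayleigh quotients, with respect to the frame `e`, of the `C¹`
functions with compact support in `U`; that is, `m ≤ λ₁(U)`. -/
def HasRayleighBound (e : ι → E) (μ : Measure E) (U : Set E) (m : ℝ) : Prop :=
  ∀ f : E → ℝ, ContDiff ℝ 1 f → HasCompactSupport f → tsupport f ⊆ U →
    m * ∫ x, f x ^ 2 ∂μ ≤ ∫ x, frameInner e f f x ∂μ

/-- A finite-energy classical solution of `-Δu = lam u` in the open set `U` with Dirichlet boundary
values, extended by zero; the Laplacian and the energy are those of the frame `e`. The zero function
is allowed. -/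
structure IsDirichletSolution (e : ι → E) (μ : Measure E) (U : Set E) (lam : ℝ) (u : E → ℝ) :
    Prop where
  isOpen : IsOpen U
  continuous : Continuous u
  eq_zero_of_notMem : ∀ x ∉ U, u x = 0
  contDiffOn : ContDiffOn ℝ 2 u U
  integrableOn_sq : IntegrableOn (fun x => u x ^ 2) U μ
  integrableOn_frameInner : IntegrableOn (frameInner e u u) U μ
  neg_frameLaplacian_eq : ∀ x ∈ U, -frameLaplacian e u x = lam * u x

variable {e : ι → E} {μ : Measure E} {U V : Set E} {lam : ℝ} {u v : E → ℝ}

namespace IsDirichletSolution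

lemma contDiffAt (hu : IsDirichletSolution e μ U lam u) {x : E} (hx : x ∈ U) :
    ContDiffAt ℝ 2 u x :=
  hu.contDiffOn.contDiffAt (hu.isOpen.mem_nhds hx)

lemma differentiableAt (hu : IsDirichletSolution e μ U lam u) {x : E}
    (hx : x ∈ U) : DifferentiableAt ℝ u x :=
  (hu.contDiffAt hx).differentiableAt two_ne_zero

lemma support_subset (hu : IsDirichletSolution e μ U lam u) :
    Function.support u ⊆ U :=
  Function.support_subset_iff'.2 hu.eq_zero_of_notMem

lemma contDiffAt_of_ne_zero (hu : IsDirichletSolution e μ U lam u) {x : E}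
    (hx : u x ≠ 0) : ContDiffAt ℝ 1 u x :=
  (hu.contDiffAt (hu.support_subset hx)).of_le one_le_two

lemma integrable_sq (hu : IsDirichletSolution e μ U lam u) :
    Integrable (fun x => u x ^ 2) μ :=
  (integrableOn_iff_integrable_of_support_subset
    ((Function.support_pow u two_ne_zero).trans_subset hu.support_subset)).1 hu.integrableOn_sq

lemma comp_perm (hu : IsDirichletSolution e μ U lam u) (σ : Equiv.Perm ι) :
    IsDirichletSolution (e ∘ σ) μ U lam u where
  __ := hu
  integrableOn_frameInner := by
    simpa only [frameInner_comp_perm] using hu.integrableOn_frameInner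
  neg_frameLaplacian_eq := by
    simpa only [frameLaplacian_comp_perm] using hu.neg_frameLaplacian_eq

variable [BorelSpace E]

protected lemma indicator (hu : IsDirichletSolution e μ U lam u) (hV : IsOpen V)
    (hfr : ∀ x ∈ frontier V, u x = 0) :
    IsDirichletSolution e μ (U ∩ V) lam (V.indicator u) := by
  have heq {x : E} (hx : x ∈ U ∩ V) : V.indicator u =ᶠ[𝓝 x] u :=
    eqOn_indicator.eventuallyEq_of_mem (hV.mem_nhds hx.2)
  have hmeas : MeasurableSet (U ∩ V) := (hu.isOpen.inter hV).measurableSet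
  refine ⟨hu.isOpen.inter hV, continuous_indicator hfr hu.continuous.continuousOn, fun x hx => ?_,
    (hu.contDiffOn.mono inter_subset_left).congr fun x hx => (heq hx).eq_of_nhds, ?_, ?_,
    fun x hx => ?_⟩
  · rw [indicator_apply_eq_zero]
    exact fun hxV => hu.eq_zero_of_notMem x fun hxU => hx ⟨hxU, hxV⟩
  · exact (hu.integrableOn_sq.mono_set inter_subset_left).congr_fun
      (fun x hx => by rw [(heq hx).eq_of_nhds]) hmeas
  · exact (hu.integrableOn_frameInner.mono_set inter_subset_left).congr_fun
      (fun x hx => (frameInner_congr (heq hx)).symm) hmeas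
  · rw [frameLaplacian_congr (heq hx), (heq hx).eq_of_nhds, hu.neg_frameLaplacian_eq x hx.1]

lemma comp_equiv {F : Type*} [NormedAddCommGroup F] [NormedSpace ℝ F]
    [MeasurableSpace F] [BorelSpace F] {ν : Measure F} {U : Set F} {u : F → ℝ} (P : E ≃L[ℝ] F)
    (hP : MeasurePreserving P μ ν) (hu : IsDirichletSolution (P ∘ e) ν U lam u) :
    IsDirichletSolution e μ (P ⁻¹' U) lam (u ∘ P) where
  isOpen := hu.isOpen.preimage P.continuous
  continuous := hu.continuous.comp P.continuous
  eq_zero_of_notMem x hx := hu.eq_zero_of_notMem (P x) hx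
  contDiffOn := hu.contDiffOn.comp_continuousLinearMap P.toContinuousLinearMap
  integrableOn_sq := (hP.integrableOn_comp_preimage P.toHomeomorph.measurableEmbedding).2
    hu.integrableOn_sq
  integrableOn_frameInner := by
    rw [frameInner_comp_equiv]
    exact (hP.integrableOn_comp_preimage P.toHomeomorph.measurableEmbedding).2
      hu.integrableOn_frameInner
  neg_frameLaplacian_eq x hx := by
    rw [frameLaplacian_comp_equiv]
    exact hu.neg_frameLaplacian_eq (P x) hx

protected lemma sub (hu : IsDirichletSolution e μ U lam u)
    (hv : IsDirichletSolution e μ U lam v) : IsDirichletSolution e μ U lam (u - v) where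
  isOpen := hu.isOpen
  continuous := hu.continuous.sub hv.continuous
  eq_zero_of_notMem x hx := by simp [hu.eq_zero_of_notMem x hx, hv.eq_zero_of_notMem x hx]
  contDiffOn := hu.contDiffOn.sub hv.contDiffOn
  integrableOn_sq :=
    ((hu.integrableOn_sq.add hv.integrableOn_sq).const_mul 2).mono'
      ((hu.continuous.sub hv.continuous).pow 2).aestronglyMeasurable <| .of_forall fun x => by
        rw [norm_of_nonneg (sq_nonneg _)]
        simp only [Pi.sub_apply, Pi.add_apply]
        nlinarith [sq_nonneg (u x + v x)]
  integrableOn_frameInner :=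
    ((hu.integrableOn_frameInner.add hv.integrableOn_frameInner).const_mul 2).mono'
      measurable_frameInner.aestronglyMeasurable <| by
        filter_upwards [ae_restrict_mem hu.isOpen.measurableSet] with x hx
        rw [norm_of_nonneg frameInner_self_nonneg]
        exact frameInner_sub_self_le (hu.differentiableAt hx) (hv.differentiableAt hx)
  neg_frameLaplacian_eq x hx := by
    rw [frameLaplacian_sub (hu.contDiffAt hx) (hv.contDiffAt hx), neg_sub, Pi.sub_apply]
    linear_combination hu.neg_frameLaplacian_eq x hx - hv.neg_frameLaplacian_eq x hx

end IsDirichletSolution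

end DirichletSolution

/-! ### Energy identity and the reflection principle -/

section Energy

lemma integrable_mul_of_tsupport_subset {X : Type*} [TopologicalSpace X] [MeasurableSpace X]
    [OpensMeasurableSpace X] {μ : Measure X} [IsFiniteMeasureOnCompacts μ] {U : Set X}
    {f g : X → ℝ} (hU : IsOpen U) (hf : Continuous f) (hc : HasCompactSupport f)
    (hs : tsupport f ⊆ U) (hg : ContinuousOn g U) : Integrable (fun x => f x * g x) μ :=
  ((hf.continuousOn.mul hg).continuous_of_tsupport_subset hU
    (tsupport_mul_subset_left.trans hs)).integrable_of_hasCompactSupport hc.mul_right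

variable {E ι : Type*} [NormedAddCommGroup E] [NormedSpace ℝ E] [MeasurableSpace E]
  [BorelSpace E] [Fintype ι] {e : ι → E} {μ : Measure E} {U V : Set E} {lam m : ℝ}
  {u w f : E → ℝ}

lemma integrable_fderiv_mul_fderiv [IsFiniteMeasureOnCompacts μ] (hU : IsOpen U)
    (hu : ContDiffOn ℝ 2 u U) (hf : ContDiff ℝ 1 f) (hc : HasCompactSupport f)
    (hs : tsupport f ⊆ U) (v : E) :
    Integrable (fun x => fderiv ℝ f x v * fderiv ℝ u x v) μ :=
  integrable_mul_of_tsupport_subset hU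
    ((hf.continuous_fderiv one_ne_zero).clm_apply continuous_const) (hc.fderiv_apply (𝕜 := ℝ) v)
    ((tsupport_fderiv_apply_subset ℝ v).trans hs)
    ((hu.continuousOn_fderiv_of_isOpen hU one_le_two).clm_apply continuousOn_const)

lemma integrable_mul_fderiv_fderiv [IsFiniteMeasureOnCompacts μ] (hU : IsOpen U)
    (hu : ContDiffOn ℝ 2 u U) (hf : Continuous f) (hc : HasCompactSupport f)
    (hs : tsupport f ⊆ U) (v : E) :
    Integrable (fun x => f x * fderiv ℝ (fun y => fderiv ℝ u y v) x v) μ := by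
  have hd : ContDiffOn ℝ 1 (fun x => fderiv ℝ u x v) U :=
    (hu.fderiv_of_isOpen hU le_rfl).clm_apply contDiffOn_const
  exact integrable_mul_of_tsupport_subset hU hf hc hs
    ((hd.continuousOn_fderiv_of_isOpen hU le_rfl).clm_apply continuousOn_const)

variable [FiniteDimensional ℝ E]

lemma tendsto_integral_testApprox_sq (hw : Continuous w) (hC : ∀ x, w x ≠ 0 → ContDiffAt ℝ 1 w x)
    (hsq : Integrable (fun x => w x ^ 2) μ) :
    Tendsto (fun n => ∫ x, testApprox w n x ^ 2 ∂μ) atTop (𝓝 (∫ x, w x ^ 2 ∂μ)) := by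
  refine tendsto_integral_of_dominated_convergence _
    (fun n => ((contDiff_testApprox hw hC n).continuous.pow 2).aestronglyMeasurable) hsq
    (fun n => .of_forall fun x => ?_) (.of_forall fun x => (tendsto_testApprox x).pow 2)
  rw [norm_of_nonneg (sq_nonneg _)]
  exact sq_le_sq.2 (abs_testApprox_le n x)

lemma tendsto_integral_testApprox_mul (hw : Continuous w)
    (hC : ∀ x, w x ≠ 0 → ContDiffAt ℝ 1 w x) (hsq : Integrable (fun x => w x ^ 2) μ) :
    Tendsto (fun n => ∫ x, testApprox w n x * w x ∂μ) atTop (𝓝 (∫ x, w x ^ 2 ∂μ)) := by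
  simp only [pow_two] at hsq ⊢
  refine tendsto_integral_of_dominated_convergence _
    (fun n => ((contDiff_testApprox hw hC n).continuous.mul hw).aestronglyMeasurable) hsq
    (fun n => .of_forall fun x => ?_)
    (.of_forall fun x => (tendsto_testApprox x).mul tendsto_const_nhds)
  rw [norm_mul, ← abs_mul_abs_self (w x)]
  exact mul_le_mul_of_nonneg_right (abs_testApprox_le n x) (abs_nonneg _)

lemma tendsto_integral_frameInner_testApprox (hw : Continuous w)
    (hdiff : ∀ x, w x ≠ 0 → DifferentiableAt ℝ w x) (hsq : Integrable (fun x => w x ^ 2) μ)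
    (henergy : IntegrableOn (frameInner e w w) (Function.support w) μ) {v : ℕ → E → ℝ} {C : ℝ}
    (hv : ∀ n x, w x ≠ 0 → frameInner e (v n) (v n) x ≤ C * (frameInner e w w x + w x ^ 2))
    (hlim : ∀ x, w x ≠ 0 → ∀ i,
      Tendsto (fun n => fderiv ℝ (v n) x (e i)) atTop (𝓝 (fderiv ℝ w x (e i)))) :
    Tendsto (fun n => ∫ x, frameInner e (testApprox w n) (v n) x ∂μ) atTop
      (𝓝 (∫ x in Function.support w, frameInner e w w x ∂μ)) := by
  have hrestrict (n : ℕ) : ∫ x, frameInner e (testApprox w n) (v n) x ∂μ =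
      ∫ x in Function.support w, frameInner e (testApprox w n) (v n) x ∂μ :=
    (setIntegral_eq_integral_of_forall_compl_eq_zero fun x hx =>
      frameInner_testApprox_of_eq_zero hw (Function.notMem_support.1 hx) e n (v n)).symm
  obtain ⟨C', hC'⟩ := exists_frameInner_testApprox_le e
  have hmem : ∀ᵐ x ∂μ.restrict (Function.support w), w x ≠ 0 :=
    ae_restrict_mem hw.isOpen_support.measurableSet
  simp only [hrestrict]
  refine tendsto_integral_of_dominated_convergence
    (fun x => (C' + C) * (frameInner e w w x + w x ^ 2))
    (fun n => measurable_frameInner.aestronglyMeasurable)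
    ((henergy.add hsq.integrableOn).const_mul _) (fun n => ?_) ?_
  · filter_upwards [hmem] with x hx
    rw [add_mul]
    exact abs_frameInner_le.trans (add_le_add (hC' w x (hdiff x hx) n) (hv n x hx))
  · filter_upwards [hmem] with x hx
    exact tendsto_finsetSum _ fun i _ =>
      (tendsto_fderiv_testApprox (hdiff x hx) hx (e i)).mul (hlim x hx i)

lemma HasRayleighBound.mul_integral_sq_le (hm : HasRayleighBound e μ U m)
    (hu : IsDirichletSolution e μ U lam u) :
    m * ∫ x, u x ^ 2 ∂μ ≤ ∫ x in Function.support u, frameInner e u u x ∂μ := by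
  have hdiff (x : E) (hx : u x ≠ 0) : DifferentiableAt ℝ u x :=
    hu.differentiableAt (hu.support_subset hx)
  obtain ⟨C, hbound⟩ := exists_frameInner_testApprox_le e
  have hleft := (tendsto_integral_testApprox_sq hu.continuous (fun _ => hu.contDiffAt_of_ne_zero)
    hu.integrable_sq).const_mul m
  have hright : Tendsto (fun n => ∫ x, frameInner e (testApprox u n) (testApprox u n) x ∂μ) atTop
      (𝓝 (∫ x in Function.support u, frameInner e u u x ∂μ)) :=
    tendsto_integral_frameInner_testApprox hu.continuous hdiff hu.integrable_sq
      (hu.integrableOn_frameInner.mono_set hu.support_subset)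
      (fun n x hx => hbound u x (hdiff x hx) n)
      fun x hx i => tendsto_fderiv_testApprox (hdiff x hx) hx (e i)
  exact le_of_tendsto_of_tendsto' hleft hright fun n =>
    hm _ (contDiff_testApprox hu.continuous (fun _ => hu.contDiffAt_of_ne_zero) n)
      (hasCompactSupport_testApprox n)
      ((tsupport_testApprox_subset hu.continuous n).trans hu.support_subset)

variable [μ.IsAddHaarMeasure]

lemma integral_fderiv_mul_fderiv_eq (hU : IsOpen U) (hu : ContDiffOn ℝ 2 u U)
    (hf : ContDiff ℝ 1 f) (hc : HasCompactSupport f) (hs : tsupport f ⊆ U) (v : E) :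
    ∫ x, fderiv ℝ f x v * fderiv ℝ u x v ∂μ =
      -∫ x, f x * fderiv ℝ (fun y => fderiv ℝ u y v) x v ∂μ := by
  have hfu : Integrable (fun x => f x * fderiv ℝ u x v) μ :=
    integrable_mul_of_tsupport_subset hU hf.continuous hc hs
      ((hu.continuousOn_fderiv_of_isOpen hU one_le_two).clm_apply continuousOn_const)
  rw [integral_mul_fderiv_eq_neg_fderiv_mul_of_integrable
    (integrable_fderiv_mul_fderiv hU hu hf hc hs v)
    (integrable_mul_fderiv_fderiv hU hu hf.continuous hc hs v) hfu
    (fun x _ => hf.differentiable one_ne_zero x)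
    fun x hx => differentiableAt_fderiv_apply (hu.contDiffAt (hU.mem_nhds (hs hx))) v, neg_neg]

namespace IsDirichletSolution

lemma integral_frameInner_eq (hu : IsDirichletSolution e μ U lam u) (hf : ContDiff ℝ 1 f)
    (hc : HasCompactSupport f) (hs : tsupport f ⊆ U) :
    ∫ x, frameInner e f u x ∂μ = lam * ∫ x, f x * u x ∂μ := by
  calc ∫ x, frameInner e f u x ∂μ
      = ∑ i, ∫ x, fderiv ℝ f x (e i) * fderiv ℝ u x (e i) ∂μ :=
        integral_finsetSum _ fun i _ =>
          integrable_fderiv_mul_fderiv hu.isOpen hu.contDiffOn hf hc hs (e i)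
    _ = -∑ i, ∫ x, f x * fderiv ℝ (fun y => fderiv ℝ u y (e i)) x (e i) ∂μ := by
        rw [← Finset.sum_neg_distrib]
        exact Finset.sum_congr rfl fun i _ =>
          integral_fderiv_mul_fderiv_eq hu.isOpen hu.contDiffOn hf hc hs (e i)
    _ = -∫ x, f x * frameLaplacian e u x ∂μ := by
        simp only [frameLaplacian, Finset.mul_sum]
        rw [integral_finsetSum _ fun i _ =>
          integrable_mul_fderiv_fderiv hu.isOpen hu.contDiffOn hf.continuous hc hs (e i)]
    _ = ∫ x, lam * (f x * u x) ∂μ := by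
        rw [← integral_neg]
        refine integral_congr_ae (.of_forall fun x => ?_)
        by_cases hx : x ∈ tsupport f
        · linear_combination f x * hu.neg_frameLaplacian_eq x (hs hx)
        · simp [image_eq_zero_of_notMem_tsupport hx]
    _ = lam * ∫ x, f x * u x ∂μ := integral_const_mul _ _

lemma setIntegral_frameInner_self_eq (hu : IsDirichletSolution e μ U lam u) :
    ∫ x in Function.support u, frameInner e u u x ∂μ = lam * ∫ x, u x ^ 2 ∂μ := by
  have hleft : Tendsto (fun n => ∫ x, frameInner e (testApprox u n) u x ∂μ) atTop
      (𝓝 (∫ x in Function.support u, frameInner e u u x ∂μ)) :=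
    tendsto_integral_frameInner_testApprox (C := 1) hu.continuous
      (fun x hx => hu.differentiableAt (hu.support_subset hx)) hu.integrable_sq
      (hu.integrableOn_frameInner.mono_set hu.support_subset)
      (fun _ x _ => by rw [one_mul]; exact le_add_of_nonneg_right (sq_nonneg _))
      fun x _ i => tendsto_const_nhds
  have hright := (tendsto_integral_testApprox_mul hu.continuous
    (fun _ => hu.contDiffAt_of_ne_zero) hu.integrable_sq).const_mul lam
  refine tendsto_nhds_unique hleft (hright.congr fun n => ?_)
  exact (hu.integral_frameInner_eq
    (contDiff_testApprox hu.continuous (fun _ => hu.contDiffAt_of_ne_zero) n)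
    (hasCompactSupport_testApprox n)
    ((tsupport_testApprox_subset hu.continuous n).trans hu.support_subset)).symm

lemma eq_zero_of_hasRayleighBound (hu : IsDirichletSolution e μ U lam u)
    (hm : HasRayleighBound e μ U m) (hlam : lam < m) : u = 0 := by
  have hzero : ∫ x, u x ^ 2 ∂μ = 0 := by
    have hnonneg : 0 ≤ ∫ x, u x ^ 2 ∂μ := integral_nonneg fun x => sq_nonneg _
    nlinarith [(hm.mul_integral_sq_le hu).trans_eq hu.setIntegral_frameInner_self_eq]
  have hae : (fun x => u x ^ 2) =ᵐ[μ] 0 :=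
    (integral_eq_zero_iff_of_nonneg (fun x => sq_nonneg _) hu.integrable_sq).1 hzero
  exact (hu.continuous.ae_eq_iff_eq μ continuous_zero).1
    (hae.mono fun x hx => pow_eq_zero_iff two_ne_zero |>.1 hx)

end IsDirichletSolution

lemma measurePreserving_of_involutive {S : E ≃L[ℝ] E} (hS : Function.Involutive S) :
    MeasurePreserving S μ μ := by
  have hdet : LinearMap.det (S : E →ₗ[ℝ] E) * LinearMap.det (S : E →ₗ[ℝ] E) = 1 := by
    rw [← LinearMap.det_comp, show (S : E →ₗ[ℝ] E) ∘ₗ S = LinearMap.id from LinearMap.ext hS,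
      LinearMap.det_id]
  have habs : |LinearMap.det (S : E →ₗ[ℝ] E)| = 1 := by
    rcases mul_self_eq_one_iff.1 hdet with h | h <;> simp [h]
  refine ⟨S.continuous.measurable, ?_⟩
  have hmap := Measure.map_linearMap_addHaar_eq_smul_addHaar μ (left_ne_zero_of_mul_eq_one hdet)
  rwa [abs_inv, habs, inv_one, ENNReal.ofReal_one, one_smul] at hmap

lemma IsDirichletSolution.comp_involutive (hu : IsDirichletSolution e μ U lam u) {S : E ≃L[ℝ] E}
    (hS : Function.Involutive S) {σ : Equiv.Perm ι} (hSe : S ∘ e = e ∘ σ) (hSU : S ⁻¹' U = U) :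
    IsDirichletSolution e μ U lam (u ∘ S) := by
  rw [← hSU]
  exact comp_equiv S (measurePreserving_of_involutive hS) (hSe ▸ hu.comp_perm σ)

/-- Reflection principle: `u - u ∘ S` restricted to one side `V` of the mirror is a Dirichlet
solution there. -/
lemma IsDirichletSolution.comp_eq_self (hu : IsDirichletSolution e μ U lam u) {S : E ≃L[ℝ] E}
    (hS : Function.Involutive S) {σ : Equiv.Perm ι} (hSe : S ∘ e = e ∘ σ) (hSU : S ⁻¹' U = U)
    (hV : IsOpen V) (hfr : ∀ x ∈ frontier V, S x = x) (hcover : ∀ x, x ∈ V ∨ S x ∈ V ∨ S x = x)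
    (hm : HasRayleighBound e μ (U ∩ V) m) (hlam : lam < m) : u ∘ S = u := by
  have hcomp := hu.comp_involutive hS hSe hSU
  have hhalf : V.indicator (u - u ∘ S) = 0 :=
    ((hu.sub hcomp).indicator hV fun x hx => by simp [hfr x hx]).eq_zero_of_hasRayleighBound hm hlam
  have hside (x : E) (hx : x ∈ V) : u (S x) = u x := by
    have hzero : u x - u (S x) = 0 := by simpa [hx] using congrFun hhalf x
    exact (sub_eq_zero.1 hzero).symm
  ext x
  rcases hcover x with hx | hx | hx
  · exact hside x hx
  · simpa [hS x] using (hside (S x) hx).symm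
  · simp [hx]

end Energy

/-! ### Rayleigh bounds -/

section RayleighBound

lemma hasCompactSupport_comp_prodMk {X Y : Type*} [TopologicalSpace X] [TopologicalSpace Y]
    [T2Space X] [T2Space Y] {f : X × Y → ℝ} (hc : HasCompactSupport f) (x : X) :
    HasCompactSupport fun y => f (x, y) :=
  hc.comp_isClosedEmbedding <| Function.LeftInverse.isClosedEmbedding (f := Prod.snd)
    (fun _ => rfl) continuous_snd (Continuous.prodMk_right x)

lemma frameInner_comp_prodMk {E G ι : Type*} [NormedAddCommGroup E] [NormedSpace ℝ E]
    [NormedAddCommGroup G] [NormedSpace ℝ G] [Fintype ι] {e : ι → E} {f : G × E → ℝ}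
    (hf : Differentiable ℝ f) (y : G) (x : E) :
    frameInner e (fun x => f (y, x)) (fun x => f (y, x)) x =
      frameInner (fun i => ((0 : G), e i)) f f (y, x) := by
  have hderiv : HasFDerivAt (fun x => f (y, x))
      ((fderiv ℝ f (y, x)).comp (ContinuousLinearMap.inr ℝ G E)) x :=
    (hf (y, x)).hasFDerivAt.comp x (hasFDerivAt_prodMk_right y x)
  simp [frameInner, hderiv.fderiv]

lemma integrable_sq_of_hasCompactSupport {X : Type*} [TopologicalSpace X] [MeasurableSpace X]
    [OpensMeasurableSpace X] {μ : Measure X} [IsFiniteMeasureOnCompacts μ] {f : X → ℝ}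
    (hf : Continuous f) (hc : HasCompactSupport f) : Integrable (fun x => f x ^ 2) μ := by
  simp only [pow_two]
  exact (hf.mul hf).integrable_of_hasCompactSupport hc.mul_right

variable {E ι : Type*} [NormedAddCommGroup E] [NormedSpace ℝ E] [MeasurableSpace E] [Fintype ι]
  {e : ι → E} {μ : Measure E} {U V : Set E} {m : ℝ} {f : E → ℝ}

lemma HasRayleighBound.mono_set (h : HasRayleighBound e μ U m) (hVU : V ⊆ U) :
    HasRayleighBound e μ V m :=
  fun f hf hc hs => h f hf hc (hs.trans hVU)

lemma integrable_frameInner_self [OpensMeasurableSpace E] [IsFiniteMeasureOnCompacts μ]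
    (hf : ContDiff ℝ 1 f) (hc : HasCompactSupport f) : Integrable (frameInner e f f) μ := by
  have hcont (i : ι) : Continuous fun x => fderiv ℝ f x (e i) :=
    (hf.continuous_fderiv one_ne_zero).clm_apply continuous_const
  exact integrable_finsetSum _ fun i _ => ((hcont i).mul (hcont i)).integrable_of_hasCompactSupport
    (hc.fderiv_apply (𝕜 := ℝ) (e i)).mul_right

lemma HasRayleighBound.of_comp_injective {κ : Type*} [Fintype κ] [OpensMeasurableSpace E]
    [IsFiniteMeasureOnCompacts μ] {j : κ → ι} (hj : j.Injective)
    (h : HasRayleighBound (e ∘ j) μ U m) : HasRayleighBound e μ U m := fun f hf hc hs =>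
  (h f hf hc hs).trans <| integral_mono (integrable_frameInner_self hf hc)
    (integrable_frameInner_self hf hc) fun x => by
      refine (Finset.sum_map Finset.univ ⟨j, hj⟩
        fun i => fderiv ℝ f x (e i) * fderiv ℝ f x (e i)).symm.trans_le ?_
      exact Finset.sum_le_univ_sum_of_nonneg fun i => mul_self_nonneg _

variable {G : Type*} [NormedAddCommGroup G] [NormedSpace ℝ G]

lemma HasRayleighBound.prod [MeasurableSpace G] [OpensMeasurableSpace (G × E)]
    {ν : Measure G} [SFinite ν] [SFinite μ] [IsFiniteMeasureOnCompacts ν]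
    [IsFiniteMeasureOnCompacts μ] (h : HasRayleighBound e μ U m) :
    HasRayleighBound (fun i => ((0 : G), e i)) (ν.prod μ) (univ ×ˢ U) m := by
  intro f hf hc hs
  have hsq : Integrable (fun z => f z ^ 2) (ν.prod μ) :=
    integrable_sq_of_hasCompactSupport hf.continuous hc
  have henergy : Integrable (frameInner (fun i => ((0 : G), e i)) f f) (ν.prod μ) :=
    integrable_frameInner_self hf hc
  rw [integral_prod _ hsq, integral_prod _ henergy, ← integral_const_mul]
  refine integral_mono (hsq.integral_prod_left.const_mul m) henergy.integral_prod_left fun y => ?_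
  have hslice : tsupport (fun x => f (y, x)) ⊆ Prod.mk y ⁻¹' tsupport f :=
    tsupport_comp_subset_preimage f (f := Prod.mk y) (by fun_prop)
  have hdiff := hf.differentiable one_ne_zero
  simp_rw [← frameInner_comp_prodMk hdiff]
  exact h _ (hf.comp (by fun_prop)) (hasCompactSupport_comp_prodMk hc y)
    fun x hx => (hs (hslice hx)).2

end RayleighBound

/-! ### Adjacent transpositions -/

lemma apply_comp_perm_eq_of_forall_adjacent {n : ℕ} {α β : Type*} {F : (Fin (n + 1) → α) → β}
    (hF : ∀ (i : Fin n) c, F (c ∘ Equiv.swap i.castSucc i.succ) = F c)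
    (σ : Equiv.Perm (Fin (n + 1))) (c : Fin (n + 1) → α) : F (c ∘ σ) = F c := by
  have hσ : σ ∈ Submonoid.closure
      (range fun i : Fin n => Equiv.swap i.castSucc i.succ) := by
    rw [Equiv.Perm.mclosure_swap_castSucc_succ]
    exact Submonoid.mem_top σ
  induction hσ using Submonoid.closure_induction generalizing c with
  | mem τ hτ =>
    obtain ⟨i, rfl⟩ := hτ
    exact hF i c
  | one => rfl
  | mul τ ρ _ _ hτ hρ => exact (hρ (c ∘ τ)).trans (hτ c)

/-! ### The broken guide and the Fichera layer -/

section FicheraLayer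

/-- The standard basis of `ℝ²`. -/
def frame2 : Fin 2 → ℝ × ℝ := ![(1, 0), (0, 1)]

/-- The standard basis of `ℝ³ = ℝ × (ℝ × ℝ)`. -/
def frame3 : Fin 3 → ℝ × ℝ × ℝ := ![(1, 0, 0), (0, 1, 0), (0, 0, 1)]

lemma gradSq2_eq_frameInner (u : ℝ × ℝ → ℝ) : gradSq2 u = frameInner frame2 u u := by
  ext x
  simp [gradSq2, frameInner, frame2, pow_two]

lemma gradSq3_eq_frameInner (u : ℝ × ℝ × ℝ → ℝ) : gradSq3 u = frameInner frame3 u u := by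
  ext x
  simp [gradSq3, frameInner, frame3, Fin.sum_univ_three, pow_two]

lemma lap3_eq_frameLaplacian (u : ℝ × ℝ × ℝ → ℝ) : lap3 u = frameLaplacian frame3 u := by
  ext x
  simp only [frameLaplacian, frame3, Fin.sum_univ_three]
  rfl

lemma hasRayleighBound_lamG : HasRayleighBound frame2 volume Gam lamG := by
  intro f hf hc hs
  rw [← gradSq2_eq_frameInner]
  have hnonneg (u : ℝ × ℝ → ℝ) (p : ℝ × ℝ) : 0 ≤ gradSq2 u p := by
    rw [gradSq2_eq_frameInner]
    exact frameInner_self_nonneg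
  have hsq : ∫ p in Gam, f p ^ 2 = ∫ p, f p ^ 2 :=
    setIntegral_eq_integral_of_forall_compl_eq_zero fun p hp => by
      simp [image_eq_zero_of_notMem_tsupport fun hmem => hp (hs hmem)]
  have henergy : ∫ p in Gam, gradSq2 f p = ∫ p, gradSq2 f p :=
    setIntegral_eq_integral_of_forall_compl_eq_zero fun p hp => by
      rw [gradSq2_eq_frameInner]
      exact frameInner_eq_zero_of_notMem_tsupport fun hmem => hp (hs hmem)
  have hsq_nonneg : 0 ≤ ∫ p, f p ^ 2 := integral_nonneg fun p => sq_nonneg _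
  rcases hsq_nonneg.eq_or_lt with hzero | hpos
  · rw [← hzero, mul_zero]
    exact integral_nonneg (hnonneg f)
  · rw [← le_div_iff₀ hpos, ← hsq, ← henergy]
    refine csInf_le ⟨0, ?_⟩ ⟨f, hf, hc, hs, by rw [hsq]; exact hpos.ne', rfl⟩
    rintro _ ⟨u, -, -, -, -, rfl⟩
    exact div_nonneg (integral_nonneg (hnonneg u)) (integral_nonneg fun p => sq_nonneg _)

lemma Lam3_inter_subset_univ_prod_Gam :
    Lam3 ∩ {x | x.2.1 < x.1} ⊆ univ ×ˢ Gam := by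
  rintro x ⟨hx, hlt⟩
  have hmin : min x.1 (min x.2.1 x.2.2) = min x.2.1 x.2.2 :=
    min_eq_right ((min_le_left _ _).trans hlt.le)
  rw [Lam3, mem_ofPred_eq, hmin] at hx
  exact ⟨mem_univ _, hx⟩

lemma hasRayleighBound_Lam3_inter :
    HasRayleighBound frame3 volume (Lam3 ∩ {x | x.2.1 < x.1}) lamG := by
  have hframe : frame3 ∘ Fin.succ = fun i => ((0 : ℝ), frame2 i) := by
    ext i <;> fin_cases i <;> rfl
  refine HasRayleighBound.mono_set ?_ Lam3_inter_subset_univ_prod_Gam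
  refine .of_comp_injective (Fin.succ_injective 2) ?_
  rw [hframe]
  exact hasRayleighBound_lamG.prod

lemma isOpen_Lam3 : IsOpen Lam3 := by
  have hmin : Continuous fun x : ℝ × ℝ × ℝ => min x.1 (min x.2.1 x.2.2) := by fun_prop
  exact (isOpen_lt continuous_const hmin).inter (isOpen_lt hmin continuous_const)

/-- The reflection `(x₁, x₂, x₃) ↦ (x₂, x₁, x₃)`. -/
def swapXY : (ℝ × ℝ × ℝ) ≃L[ℝ] ℝ × ℝ × ℝ :=
  (ContinuousLinearEquiv.prodAssoc ℝ ℝ ℝ ℝ).symm.trans <|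
    ((ContinuousLinearEquiv.prodComm ℝ ℝ ℝ).prodCongr (.refl ℝ ℝ)).trans <|
      ContinuousLinearEquiv.prodAssoc ℝ ℝ ℝ ℝ

/-- The reflection `(x₁, x₂, x₃) ↦ (x₁, x₃, x₂)`. -/
def swapYZ : (ℝ × ℝ × ℝ) ≃L[ℝ] ℝ × ℝ × ℝ :=
  (ContinuousLinearEquiv.refl ℝ ℝ).prodCongr (.prodComm ℝ ℝ ℝ)

lemma swapXY_apply (x : ℝ × ℝ × ℝ) : swapXY x = (x.2.1, x.1, x.2.2) := rfl

lemma swapYZ_apply (x : ℝ × ℝ × ℝ) : swapYZ x = (x.1, x.2.2, x.2.1) := rfl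

lemma swapXY_eq_self {x : ℝ × ℝ × ℝ} (hx : x.2.1 = x.1) : swapXY x = x :=
  Prod.ext hx (Prod.ext hx.symm rfl)

lemma involutive_swapXY : Function.Involutive swapXY := fun _ => rfl

lemma involutive_swapYZ : Function.Involutive swapYZ := fun _ => rfl

lemma swapXY_comp_frame3 : swapXY ∘ frame3 = frame3 ∘ Equiv.swap 0 1 := by
  funext i
  fin_cases i <;> rfl

lemma swapYZ_comp_frame3 : swapYZ ∘ frame3 = frame3 ∘ Equiv.swap 1 2 := by
  funext i
  fin_cases i <;> rfl

lemma preimage_swapXY_Lam3 : swapXY ⁻¹' Lam3 = Lam3 := by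
  ext x
  simp only [Lam3, mem_preimage, mem_ofPred_eq, swapXY_apply, min_left_comm]

lemma preimage_swapYZ_Lam3 : swapYZ ⁻¹' Lam3 = Lam3 := by
  ext x
  simp only [Lam3, mem_preimage, mem_ofPred_eq, swapYZ_apply, min_comm x.2.2]

instance : (volume : Measure (ℝ × ℝ × ℝ)).IsAddHaarMeasure :=
  Measure.prod.instIsAddHaarMeasure _ _

variable {lam : ℝ} {u : ℝ × ℝ × ℝ → ℝ}

lemma IsEigenLam.isDirichletSolution (hu : IsEigenLam lam u) :
    IsDirichletSolution frame3 volume Lam3 lam u := by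
  obtain ⟨hcont, hzero, hdiff, hsq, henergy, heq, -⟩ := hu
  rw [lap3_eq_frameLaplacian] at heq
  rw [gradSq3_eq_frameInner] at henergy
  exact ⟨isOpen_Lam3, hcont, hzero, hdiff, hsq, henergy, heq⟩

lemma IsDirichletSolution.comp_swapXY_eq_self
    (hu : IsDirichletSolution frame3 volume Lam3 lam u) (hlam : lam < lamG) :
    u ∘ swapXY = u := by
  have hx₁ : Continuous fun x : ℝ × ℝ × ℝ => x.1 := by fun_prop
  have hx₂ : Continuous fun x : ℝ × ℝ × ℝ => x.2.1 := by fun_prop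
  have hmirror (x : ℝ × ℝ × ℝ) (hx : x ∈ frontier {x : ℝ × ℝ × ℝ | x.2.1 < x.1}) :
      swapXY x = x := swapXY_eq_self (frontier_lt_subset_eq hx₂ hx₁ hx)
  refine hu.comp_eq_self involutive_swapXY swapXY_comp_frame3 preimage_swapXY_Lam3
    (isOpen_lt hx₂ hx₁) hmirror (fun x => ?_) hasRayleighBound_Lam3_inter hlam
  rcases lt_trichotomy x.2.1 x.1 with h | h | h
  · exact .inl h
  · exact .inr (.inr (swapXY_eq_self h))
  · exact .inr (.inl h)

lemma IsDirichletSolution.comp_swapYZ_eq_self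
    (hu : IsDirichletSolution frame3 volume Lam3 lam u) (hlam : lam < lamG) :
    u ∘ swapYZ = u := by
  have hcycle : IsDirichletSolution frame3 volume Lam3 lam ((u ∘ swapXY) ∘ swapYZ) :=
    (hu.comp_involutive involutive_swapXY swapXY_comp_frame3 preimage_swapXY_Lam3).comp_involutive
      involutive_swapYZ swapYZ_comp_frame3 preimage_swapYZ_Lam3
  ext x
  exact congrFun (hcycle.comp_swapXY_eq_self hlam) (x.2.1, x.2.2, x.1)

end FicheraLayer

/-- Lemma 3.3: any eigenfunction of the Dirichlet Laplacian on the
Fichera layer `Λ` with eigenvalue below `λ₁(Γ)` is invariant under all permutations of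
the coordinates: `u(x₁,x₂,x₃) = u(x_{σ(1)},x_{σ(2)},x_{σ(3)})` for every permutation
`σ` of `{1,2,3}` (equivalently, `u` is even with respect to the three diagonal planes
`x_i = x_j`). -/
theorem eigenfunction_symmetric :
    ∀ (lam : ℝ) (u : ℝ × ℝ × ℝ → ℝ), lam < lamG → IsEigenLam lam u →
      ∀ σ : Equiv.Perm (Fin 3), ∀ x : ℝ × ℝ × ℝ,
        u x = u (coord3 x (σ 0), coord3 x (σ 1), coord3 x (σ 2)) := by
  intro lam u hlam hu σ x
  have hsol := hu.isDirichletSolution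
  have hadj (i : Fin 2) (c : Fin 3 → ℝ) :
      u ((c ∘ Equiv.swap i.castSucc i.succ) 0, (c ∘ Equiv.swap i.castSucc i.succ) 1,
        (c ∘ Equiv.swap i.castSucc i.succ) 2) = u (c 0, c 1, c 2) := by
    fin_cases i
    · exact congrFun (hsol.comp_swapXY_eq_self hlam) (c 0, c 1, c 2)
    · exact congrFun (hsol.comp_swapYZ_eq_self hlam) (c 0, c 1, c 2)
  exact (apply_comp_perm_eq_of_forall_adjacent
    (F := fun c : Fin 3 → ℝ => u (c 0, c 1, c 2)) hadj σ (coord3 x)).symm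
end
end
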